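/- Let q = 2^h, let 2 < t < q, and let A be a KM-arc of type t in PG(2,q) whose t-nucleus is the point N = (0:0:1). Then A is an elation KM-arc with elation line ℓ∞ : X = 0 if and only if there exists a subgroup S of the additive group (F_q,+) of order t such that for every α ∈ F_q the set {z ∈ F_q : (1:α:z) ∈ A} is either empty or a coset of S in (F_q,+). -/

import Mathlib

open scoped Classical

noncomputable section

variable {K : Type*} [Field K]

/-- The absolute trace-style sum `x + x² + x⁴ + ⋯ + x^(2^(h-1))`
(it lands in the prime subfield `F₂` when `|K| = 2^h`). -/
def Tr (h : ℕ) (x : K) : K := ∑ i ∈ Finset.range h, x ^ 2 ^ i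

/-- `F₂`-independence of a tuple of elements of a field of characteristic two:
no nontrivial combination with coefficients `0`/`1` vanishes. -/
def F2Indep {n : ℕ} (v : Fin n → K) : Prop :=
  ∀ c : Fin n → K, (∀ i, c i = 0 ∨ c i = 1) → ∑ i, c i * v i = 0 → ∀ i, c i = 0

/-- The `F₂`-span of a tuple of elements of a field of characteristic two. -/
def F2Span {n : ℕ} (v : Fin n → K) : Set K :=
  {x | ∃ c : Fin n → K, (∀ i, c i = 0 ∨ c i = 1) ∧ x = ∑ i, c i * v i}

/-- `α·S` for an additive subgroup `S` of the field. -/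
def smulSub (α : K) (S : AddSubgroup K) : AddSubgroup K :=
  S.map (AddMonoidHom.mulLeft α)

/-- Points of `PG(2,q)`: one-dimensional subspaces of `K³`. -/
abbrev Pt (K : Type*) [Field K] := Projectivization K (Fin 3 → K)

/-- The point `(a : b : c)` of `PG(2,q)`. -/
def pt3 (a b c : K) (habc : ¬(a = 0 ∧ b = 0 ∧ c = 0)) : Pt K :=
  Projectivization.mk K ![a, b, c] (fun h0 => habc
    ⟨by simpa using congrFun h0 0, by simpa using congrFun h0 1, by simpa using congrFun h0 2⟩)

/-- The point `(a : b)` of `PG(1,q)`. -/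
def pt2 (a b : K) (hab : ¬(a = 0 ∧ b = 0)) : Projectivization K (Fin 2 → K) :=
  Projectivization.mk K ![a, b] (fun h0 => hab
    ⟨by simpa using congrFun h0 0, by simpa using congrFun h0 1⟩)

/-- An `F₂`-linear set of points of `PG(1,q)`: in characteristic two, the
`F₂`-subspaces of `K²` are exactly its additive subgroups. -/
def IsF2Linear (T : Set (Projectivization K (Fin 2 → K))) : Prop :=
  ∃ U : AddSubgroup (Fin 2 → K),
    T = {P | ∃ u : Fin 2 → K, ∃ hu : u ≠ 0, u ∈ U ∧ Projectivization.mk K u hu = P}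

/-- Lines of `PG(2,q)`: two-dimensional subspaces of `K³`. -/
def IsLine (L : Submodule K (Fin 3 → K)) : Prop := Module.finrank K L = 2

/-- Incidence of a point with a line. -/
def OnLine (P : Pt K) (L : Submodule K (Fin 3 → K)) : Prop := P.submodule ≤ L

/-- The number of points of `A` lying on the line `L`. -/
def secantCount (A : Set (Pt K)) (L : Submodule K (Fin 3 → K)) : ℕ :=
  {P ∈ A | OnLine P L}.ncard

/-- A KM-arc of type `t`: `q+t` points meeting every line in `0`, `2` or `t` points. -/
def IsKMArc (q t : ℕ) (A : Set (Pt K)) : Prop :=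
  A.ncard = q + t ∧ ∀ L : Submodule K (Fin 3 → K), IsLine L →
    secantCount A L = 0 ∨ secantCount A L = 2 ∨ secantCount A L = t

/-- The projectivity of `PG(2,q)` induced by an element of `GL(3,q)`. -/
def projMap (f : (Fin 3 → K) ≃ₗ[K] (Fin 3 → K)) : Pt K → Pt K :=
  Projectivization.map f.toLinearMap f.injective

/-- `f` induces an elation with axis `L` and centre `R`: it fixes every point of `L`
and maps every line through `R` to itself. -/
def IsElation (f : (Fin 3 → K) ≃ₗ[K] (Fin 3 → K)) (L : Submodule K (Fin 3 → K))
    (R : Pt K) : Prop :=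
  IsLine L ∧ OnLine R L ∧ (∀ P : Pt K, OnLine P L → projMap f P = P) ∧
    ∀ M : Submodule K (Fin 3 → K), IsLine M → OnLine R M →
      ∀ P : Pt K, OnLine P M → OnLine (projMap f P) M

/-- `f` induces an elation with axis `L` (for some centre on `L`). -/
def IsElationAxis (f : (Fin 3 → K) ≃ₗ[K] (Fin 3 → K)) (L : Submodule K (Fin 3 → K)) : Prop :=
  ∃ R : Pt K, IsElation f L R

/-- The projectivity induced by `f` stabilises the point set `A`. -/
def Stabilises (f : (Fin 3 → K) ≃ₗ[K] (Fin 3 → K)) (A : Set (Pt K)) : Prop :=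
  projMap f '' A = A

/-- `N` lies on every `t`-secant of `A` (i.e. `N` is the `t`-nucleus). -/
def IsNucleus (t : ℕ) (A : Set (Pt K)) (N : Pt K) : Prop :=
  ∀ L : Submodule K (Fin 3 → K), IsLine L → secantCount A L = t → OnLine N L

/-- An elation KM-arc of type `t` with `t`-nucleus `N` and elation line `linf`:
for every `t`-secant `L ≠ linf`, the group of elations with axis `linf` stabilising `A`
acts transitively on `A ∩ L`. -/
def IsElationKMArc (q t : ℕ) (A : Set (Pt K)) (N : Pt K)
    (linf : Submodule K (Fin 3 → K)) : Prop :=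
  IsKMArc q t A ∧ IsLine linf ∧ OnLine N linf ∧ IsNucleus t A N ∧
    ∀ L : Submodule K (Fin 3 → K), IsLine L → secantCount A L = t → L ≠ linf →
      ∀ P ∈ A, OnLine P L → ∀ Q ∈ A, OnLine Q L →
        ∃ f : (Fin 3 → K) ≃ₗ[K] (Fin 3 → K),
          IsElationAxis f linf ∧ Stabilises f A ∧ projMap f P = Q

/-- A translation KM-arc with translation line `l`: the group of elations with axis `l`
stabilising `A` acts transitively on `A \ l`. -/
def IsTranslationKMArc (A : Set (Pt K)) (l : Submodule K (Fin 3 → K)) : Prop :=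
  IsLine l ∧ ∀ P ∈ A, ¬OnLine P l → ∀ Q ∈ A, ¬OnLine Q l →
    ∃ f : (Fin 3 → K) ≃ₗ[K] (Fin 3 → K),
      IsElationAxis f l ∧ Stabilises f A ∧ projMap f P = Q

/-- The line `X = 0` of `PG(2,q)`. -/
def lineX0 (K : Type*) [Field K] : Submodule K (Fin 3 → K) :=
  LinearMap.ker (LinearMap.proj (R := K) (φ := fun _ : Fin 3 => K) 0)

/-- The line `Y = aX` of `PG(2,q)`. -/
def lineYaX (a : K) : Submodule K (Fin 3 → K) where
  carrier := {v | v 1 = a * v 0}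
  add_mem' := by
    intro v w hv hw
    simp only [Set.mem_setOf_eq, Pi.add_apply] at hv hw ⊢
    rw [hv, hw]; ring
  zero_mem' := by simp
  smul_mem' := by
    intro c v hv
    simp only [Set.mem_setOf_eq, Pi.smul_apply, smul_eq_mul] at hv ⊢
    rw [hv]; ring

/-- The point set of the `q/8`-construction (Theorem 4.4 of the paper), built from
`F₂`-independent `a 0, a 1, a 2` and coset representatives `b 0, b 1, b 2`. -/
def q8Arc (h : ℕ) (a b : Fin 3 → K) : Set (Pt K) :=
  {P | ∃ x : K, (∀ i, Tr h (a i ^ 2 * x) = 0) ∧ P = pt3 0 1 x (by simp)}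
    ∪ {P | ∃ l : Fin 3 → K, (∀ i, l i = 0 ∨ l i = 1) ∧ ∃ s : K, (∀ i, Tr h (a i * s) = 0) ∧
        P = pt3 1 (l 0 * a 0 + l 1 * a 1 + l 2 * a 2)
          ((l 0 + l 1 + l 2 + l 1 * l 2) * b 0 + (l 1 + l 2 + l 0 * l 2) * b 1
            + (l 2 + l 0 * l 1) * b 2 + s) (by simp)}

/-- The point set of the `q/16`-construction (Theorem 5.2 of the paper). -/
def q16Arc (h : ℕ) (a : Fin 4 → K) (α : K) (b : Fin 3 → K) : Set (Pt K) :=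
  {P | ∃ x : K, Tr h (a 0 * (a 0 + a 3) * x) = 0 ∧ Tr h (a 1 * (a 1 + a 3) * x) = 0 ∧
      Tr h (a 2 * (a 2 + a 3) * x) = 0 ∧ Tr h (a 3 * α * x) = 1 ∧ P = pt3 0 1 x (by simp)}
    ∪ {P | ∃ l : Fin 4 → K, (∀ i, l i = 0 ∨ l i = 1) ∧ ∃ s : K, (∀ i, Tr h (a i * s) = 0) ∧
        P = pt3 1 (l 0 * a 0 + l 1 * a 1 + l 2 * a 2 + l 3 * a 3)
          ((l 0 + l 1 + l 2 + l 1 * l 2) * b 0 + (l 1 + l 2 + l 0 * l 2) * b 1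
            + (l 2 + l 0 * l 1) * b 2 + s) (by simp)}

/-- The semilinear collineation of `PG(2,q)` sending the point spanned by `v`
to the point spanned by `M (ψ ∘ v)`. -/
def frobMap (ψ : K ≃+* K) (M : (Fin 3 → K) ≃ₗ[K] (Fin 3 → K)) (P : Pt K) : Pt K :=
  Projectivization.mk K (M fun i => ψ (P.rep i)) (by
    rw [LinearEquiv.map_ne_zero_iff]
    intro h0
    apply P.rep_nonzero
    funext i
    have h2 : P.rep i = 0 := ψ.injective (by rw [map_zero]; exact congrFun h0 i)
    simpa using h2)

/-! ### Helper lemmas -/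

theorem onLine_mk (v : Fin 3 → K) (hv : v ≠ 0) (L : Submodule K (Fin 3 → K)) :
    OnLine (Projectivization.mk K v hv) L ↔ v ∈ L := by
  rw [OnLine, Projectivization.submodule_mk, Submodule.span_singleton_le_iff_mem]

theorem onLine_rep (P : Pt K) (L : Submodule K (Fin 3 → K)) :
    OnLine P L ↔ P.rep ∈ L := by
  conv_lhs => rw [← P.mk_rep]
  exact onLine_mk _ _ _

theorem onLine_pt3 (a b c : K) (habc) (L : Submodule K (Fin 3 → K)) :
    OnLine (pt3 a b c habc) L ↔ ![a, b, c] ∈ L := onLine_mk _ _ _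

theorem mem_lineX0 (v : Fin 3 → K) : v ∈ lineX0 K ↔ v 0 = 0 := by
  simp [lineX0]

theorem mem_lineYaX (a : K) (v : Fin 3 → K) : v ∈ lineYaX a ↔ v 1 = a * v 0 := Iff.rfl

theorem isLine_lineX0 : IsLine (lineX0 K) := by
  have h := Module.Dual.finrank_ker_add_one_of_ne_zero
    (f := (LinearMap.proj (R := K) (φ := fun _ : Fin 3 => K) 0 : Module.Dual K (Fin 3 → K)))
    (by
      intro h0
      have := congrArg (fun g : Module.Dual K (Fin 3 → K) => g ![1, 0, 0]) h0
      simp at this)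
  simp only [Module.finrank_fin_fun] at h
  unfold IsLine lineX0
  omega

theorem isLine_lineYaX (a : K) : IsLine (lineYaX a) := by
  let g : Module.Dual K (Fin 3 → K) :=
    LinearMap.proj (R := K) (φ := fun _ : Fin 3 => K) 1 -
      a • LinearMap.proj (R := K) (φ := fun _ : Fin 3 => K) 0
  have h := Module.Dual.finrank_ker_add_one_of_ne_zero (f := g)
    (by
      intro h0
      have := congrArg (fun g : Module.Dual K (Fin 3 → K) => g ![0, 1, 0]) h0
      simp [g] at this)
  have h2 : lineYaX a = LinearMap.ker g := by
    ext v
    simp [mem_lineYaX, g, sub_eq_zero]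
  simp only [Module.finrank_fin_fun] at h
  unfold IsLine
  rw [h2]
  omega

theorem line_eq_of_le {L M : Submodule K (Fin 3 → K)} (hL : IsLine L) (hM : IsLine M)
    (h : L ≤ M) : L = M :=
  Submodule.eq_of_le_of_finrank_eq h (by rw [hL, hM])

theorem pt3_inj {a z a' z' : K} {h1} {h2} (h : pt3 1 a z h1 = pt3 1 a' z' h2) :
    a = a' ∧ z = z' := by
  unfold pt3 at h
  rw [Projectivization.mk_eq_mk_iff'] at h
  obtain ⟨c, hc⟩ := h
  have e0 := congrFun hc 0
  have e1 := congrFun hc 1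
  have e2 := congrFun hc 2
  simp at e0 e1 e2
  subst e0
  simp at e1 e2
  exact ⟨e1.symm, e2.symm⟩

theorem pt3_affine (v : Fin 3 → K) (hv : v ≠ 0) (h0 : v 0 ≠ 0) :
    Projectivization.mk K v hv = pt3 1 (v 1 / v 0) (v 2 / v 0) (by simp) := by
  unfold pt3
  rw [Projectivization.mk_eq_mk_iff']
  refine ⟨v 0, ?_⟩
  funext i
  fin_cases i <;> simp <;> field_simp

theorem pt_cases (P : Pt K) :
    (∃ a z : K, P = pt3 1 a z (by simp)) ∨ OnLine P (lineX0 K) := by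
  by_cases h : P.rep 0 = 0
  · right
    rw [onLine_rep, mem_lineX0]; exact h
  · left
    refine ⟨P.rep 1 / P.rep 0, P.rep 2 / P.rep 0, ?_⟩
    rw [← pt3_affine P.rep P.rep_nonzero h, P.mk_rep]

/-- A point with first two coordinates zero is the nucleus. -/
theorem eq_nuc (P : Pt K) (h0 : P.rep 0 = 0) (h1 : P.rep 1 = 0) :
    P = pt3 (0 : K) 0 1 (by simp) := by
  conv_lhs => rw [← P.mk_rep]
  unfold pt3
  rw [Projectivization.mk_eq_mk_iff']
  refine ⟨P.rep 2, ?_⟩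
  funext i
  fin_cases i <;> simp [h0, h1]

/-- A line through the nucleus and an affine point is `Y = aX`. -/
theorem line_eq_lineYaX {L : Submodule K (Fin 3 → K)} (hL : IsLine L) {a z : K}
    (hN : ![(0 : K), 0, 1] ∈ L) (hP : ![1, a, z] ∈ L) : L = lineYaX a := by
  symm
  refine line_eq_of_le (isLine_lineYaX a) hL ?_
  intro v hv
  rw [mem_lineYaX] at hv
  have : v = v 0 • ![1, a, z] + (v 2 - v 0 * z) • ![(0 : K), 0, 1] := by
    funext i
    fin_cases i <;> simp [hv, mul_comm]
  rw [this]
  exact L.add_mem (L.smul_mem _ hP) (L.smul_mem _ hN)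

theorem onLine_lineYaX_cases (a : K) (P : Pt K) (hP : OnLine P (lineYaX a)) :
    (∃ z : K, P = pt3 1 a z (by simp)) ∨ P = pt3 (0 : K) 0 1 (by simp) := by
  rcases pt_cases P with ⟨a', z, rfl⟩ | h
  · left
    rw [onLine_pt3, mem_lineYaX] at hP
    simp at hP
    subst hP
    exact ⟨z, rfl⟩
  · right
    rw [onLine_rep, mem_lineX0] at h
    rw [onLine_rep, mem_lineYaX, h, mul_zero] at hP
    exact eq_nuc P h hP

theorem isLine_span_pair (P Q : Pt K) (h : P ≠ Q) :
    IsLine (Submodule.span K {P.rep, Q.rep}) := by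
  have hli : LinearIndependent K ![P.rep, Q.rep] := by
    rw [LinearIndependent.pair_iff' P.rep_nonzero]
    intro c hc
    apply h
    rw [← P.mk_rep, ← Q.mk_rep]
    symm
    rw [Projectivization.mk_eq_mk_iff']
    exact ⟨c, hc⟩
  have := finrank_span_eq_card hli
  rw [Matrix.range_cons_cons_empty] at this
  simpa [IsLine] using this

/-- Every point of a KM-arc lies on a `t`-secant. -/
theorem exists_tsecant [Fintype K] {h t : ℕ} (hcard : Fintype.card K = 2 ^ h)
    (ht2 : 2 < t) (A : Set (Pt K)) (hA : IsKMArc (2 ^ h) t A) (P : Pt K) (hP : P ∈ A) :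
    ∃ L, IsLine L ∧ OnLine P L ∧ secantCount A L = t := by
  by_contra hcon
  push Not at hcon
  let W := (Fin 3 → K) ⧸ P.submodule
  have hW : Module.finrank K W = 2 := by
    have h1 := Submodule.finrank_quotient_add_finrank P.submodule
    rw [Projectivization.finrank_submodule, Module.finrank_fin_fun] at h1
    change Module.finrank K ((Fin 3 → K) ⧸ P.submodule) = 2
    omega
  have hne : ∀ Q : (A \ {P} : Set (Pt K)), P.submodule.mkQ Q.1.rep ≠ 0 := by
    intro Q h0
    rw [Submodule.mkQ_apply, Submodule.Quotient.mk_eq_zero, Projectivization.submodule_eq,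
      Submodule.mem_span_singleton] at h0
    obtain ⟨c, hc⟩ := h0
    apply Q.2.2
    rw [Set.mem_singleton_iff]
    have h1 := (Projectivization.mk_eq_mk_iff' K _ _ Q.1.rep_nonzero P.rep_nonzero).2 ⟨c, hc⟩
    rwa [Projectivization.mk_rep, Projectivization.mk_rep] at h1
  let d : (A \ {P} : Set (Pt K)) → Projectivization K W := fun Q =>
    Projectivization.mk K (P.submodule.mkQ Q.1.rep) (hne Q)
  have hd : Function.Injective d := by
    intro Q1 Q2 h12
    by_contra hQ
    have hQ' : Q1.1 ≠ Q2.1 := fun h => hQ (Subtype.ext h)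
    simp only [d] at h12
    rw [Projectivization.mk_eq_mk_iff'] at h12
    obtain ⟨c, hc⟩ := h12
    rw [← map_smul, ← sub_eq_zero, ← map_sub, Submodule.mkQ_apply,
      Submodule.Quotient.mk_eq_zero, Projectivization.submodule_eq,
      Submodule.mem_span_singleton] at hc
    obtain ⟨b, hb⟩ := hc
    have hPQ : P ≠ Q2.1 := fun h => Q2.2.2 h.symm
    have hL := isLine_span_pair P Q2.1 hPQ
    set L := Submodule.span K {P.rep, Q2.1.rep} with hLdef
    have m1 : P.rep ∈ L := Submodule.subset_span (by simp)
    have m2 : Q2.1.rep ∈ L := Submodule.subset_span (by simp)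
    have m3 : Q1.1.rep ∈ L := by
      have : Q1.1.rep = c • Q2.1.rep - b • P.rep := by rw [hb]; abel
      rw [this]
      exact L.sub_mem (L.smul_mem _ m2) (L.smul_mem _ m1)
    have h3 : ({P, Q1.1, Q2.1} : Set (Pt K)) ⊆ {R ∈ A | OnLine R L} := by
      rintro R (rfl | rfl | rfl)
      · exact ⟨hP, (onLine_rep _ _).2 m1⟩
      · exact ⟨Q1.2.1, (onLine_rep _ _).2 m3⟩
      · exact ⟨Q2.2.1, (onLine_rep _ _).2 m2⟩
    have h4 := Set.ncard_le_ncard h3 (Set.toFinite _)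
    have h5 : ({P, Q1.1, Q2.1} : Set (Pt K)).ncard = 3 :=
      Set.ncard_eq_three.2 ⟨_, _, _, fun h => Q1.2.2 h.symm, hPQ, hQ', rfl⟩
    have h6 := hA.2 L hL
    have h7 := hcon L hL ((onLine_rep _ _).2 m1)
    unfold secantCount at h6 h7
    omega
  have hWfin : Finite W := Module.finite_of_finite K
  have hle := Nat.card_le_card_of_injective d hd
  rw [Projectivization.card_of_finrank_two K W hW, Nat.card_eq_fintype_card (α := K), hcard,
    Nat.card_coe_set_eq, Set.ncard_sdiff_singleton_of_mem hP, hA.1] at hle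
  omega

/-- The fibre of `A` over `α`. -/
def fib (A : Set (Pt K)) (α : K) : Set K := {z : K | pt3 1 α z (by simp) ∈ A}

theorem ncard_image_fib (A : Set (Pt K)) (α : K) :
    ((fun z : K => (pt3 1 α z (by simp) : Pt K)) '' fib A α).ncard = (fib A α).ncard :=
  Set.ncard_image_of_injective _ (fun _ _ h => (pt3_inj h).2)

theorem secantCount_of_fib [Fintype K] {h t : ℕ} (hcard : Fintype.card K = 2 ^ h)
    (ht2 : 2 < t) (A : Set (Pt K)) (hA : IsKMArc (2 ^ h) t A)
    (hnuc : IsNucleus t A (pt3 (0 : K) 0 1 (by simp))) (α : K) (hne : (fib A α).Nonempty) :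
    secantCount A (lineYaX α) = t := by
  obtain ⟨z, hz⟩ := hne
  obtain ⟨L, hL, hPL, hc⟩ := exists_tsecant hcard ht2 A hA _ hz
  have hN := hnuc L hL hc
  rw [onLine_pt3] at hN hPL
  rw [← line_eq_lineYaX hL hN hPL]
  exact hc

theorem secantCount_le [Fintype K] (A : Set (Pt K)) (α : K) :
    secantCount A (lineYaX α) ≤ (fib A α).ncard + 1 := by
  rw [← ncard_image_fib]
  refine le_trans (Set.ncard_le_ncard ?_ (Set.toFinite _)) (Set.ncard_insert_le
    (pt3 (0 : K) 0 1 (by simp)) _)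
  rintro P ⟨hPA, hPL⟩
  rcases onLine_lineYaX_cases α P hPL with ⟨z, rfl⟩ | rfl
  · right; exact ⟨z, hPA, rfl⟩
  · left; rfl

theorem nuc_not_mem [Fintype K] {h t : ℕ} (hcard : Fintype.card K = 2 ^ h)
    (ht2 : 2 < t) (htq : t < 2 ^ h) (A : Set (Pt K)) (hA : IsKMArc (2 ^ h) t A)
    (hnuc : IsNucleus t A (pt3 (0 : K) 0 1 (by simp))) :
    pt3 (0 : K) 0 1 (by simp) ∉ A := by
  intro hN
  have hfib : ∀ α : K, t - 1 ≤ (fib A α).ncard := by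
    intro α
    have h1 := secantCount_le A α
    have h0 : secantCount A (lineYaX α) ≠ 0 := by
      unfold secantCount
      refine Set.ncard_ne_zero_of_mem (a := pt3 (0 : K) 0 1 (by simp)) ⟨hN, ?_⟩ (Set.toFinite _)
      rw [onLine_pt3, mem_lineYaX]
      simp
    have h2 := hA.2 _ (isLine_lineYaX α)
    have h3 : (fib A α).Nonempty := by
      apply Set.nonempty_of_ncard_ne_zero
      omega
    have h4 := secantCount_of_fib hcard ht2 A hA hnuc α h3
    omega
  let g : (Σ α : K, fib A α) → A := fun p => ⟨pt3 1 p.1 p.2.1 (by simp), p.2.2⟩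
  have hg : Function.Injective g := by
    rintro ⟨a, z, hz⟩ ⟨a', z', hz'⟩ hh
    have := pt3_inj (a := a) (z := z) (a' := a') (z' := z') (h1 := by simp) (h2 := by simp)
      (congrArg Subtype.val hh)
    obtain ⟨rfl, rfl⟩ := this
    rfl
  have h1 := Nat.card_le_card_of_injective g hg
  rw [Nat.card_sigma, Nat.card_coe_set_eq, hA.1] at h1
  have h2 : ∑ _α : K, (t - 1) ≤ ∑ α : K, Nat.card (fib A α) :=
    Finset.sum_le_sum (fun α _ => by rw [Nat.card_coe_set_eq]; exact hfib α)
  rw [Finset.sum_const, Finset.card_univ, hcard, smul_eq_mul] at h2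
  have h3 : 2 ^ h * 2 ≤ 2 ^ h * (t - 1) := Nat.mul_le_mul_left _ (by omega)
  omega

theorem ncard_fib [Fintype K] {h t : ℕ} (hcard : Fintype.card K = 2 ^ h)
    (ht2 : 2 < t) (htq : t < 2 ^ h) (A : Set (Pt K)) (hA : IsKMArc (2 ^ h) t A)
    (hnuc : IsNucleus t A (pt3 (0 : K) 0 1 (by simp))) (α : K) (hne : (fib A α).Nonempty) :
    (fib A α).ncard = t := by
  rw [← secantCount_of_fib hcard ht2 A hA hnuc α hne, ← ncard_image_fib]
  unfold secantCount
  congr 1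
  ext P
  constructor
  · rintro ⟨z, hz, rfl⟩
    refine ⟨hz, ?_⟩
    simp [onLine_pt3, mem_lineYaX]
  · rintro ⟨hPA, hPL⟩
    rcases onLine_lineYaX_cases α P hPL with ⟨z, rfl⟩ | rfl
    · exact ⟨z, hPA, rfl⟩
    · exact absurd hPA (nuc_not_mem hcard ht2 htq A hA hnuc)

theorem projMap_mk (f : (Fin 3 → K) ≃ₗ[K] (Fin 3 → K)) (v : Fin 3 → K) (hv : v ≠ 0) :
    projMap f (Projectivization.mk K v hv) =
      Projectivization.mk K (f v) (by simpa using hv) := rfl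

/-- An elation with axis `X = 0` moving a point to another one on the same line through `N`
is a translation along the third coordinate. -/
theorem elation_form (f : (Fin 3 → K) ≃ₗ[K] (Fin 3 → K)) (hf : IsElationAxis f (lineX0 K))
    (α z1 z2 : K) (hz : z1 ≠ z2)
    (hmap : projMap f (pt3 1 α z1 (by simp)) = pt3 1 α z2 (by simp)) (a z : K) :
    projMap f (pt3 1 a z (by simp)) = pt3 1 a (z + (z2 - z1)) (by simp) := by
  obtain ⟨R, -, hR0, hfix, hlines⟩ := hf
  rw [onLine_rep, mem_lineX0] at hR0
  -- the scalar on the axis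
  have hfixv : ∀ v : Fin 3 → K, v ≠ 0 → v 0 = 0 → ∃ c : K, c • v = f v := by
    intro v hv h0
    have := hfix (Projectivization.mk K v hv) (by rw [onLine_mk, mem_lineX0]; exact h0)
    rw [projMap_mk, Projectivization.mk_eq_mk_iff'] at this
    exact this
  have hne : ∀ b c : K, (b ≠ 0 ∨ c ≠ 0) → ![0, b, c] ≠ 0 := by
    intro b c hbc h0
    have e1 := congrFun h0 1
    have e2 := congrFun h0 2
    simp at e1 e2
    tauto
  obtain ⟨l1, hl1⟩ := hfixv ![0, 1, 0] (hne _ _ (by simp)) (by simp)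
  obtain ⟨l2, hl2⟩ := hfixv ![0, 0, 1] (hne _ _ (by simp)) (by simp)
  obtain ⟨l3, hl3⟩ := hfixv ![0, 1, 1] (hne _ _ (by simp)) (by simp)
  have hsum : (![0, 1, 1] : Fin 3 → K) = ![0, 1, 0] + ![0, 0, 1] := by simp
  have h13 : l3 • (![0, 1, 1] : Fin 3 → K) = l1 • ![0, 1, 0] + l2 • ![0, 0, 1] := by
    rw [hl3, hsum, map_add, hl1, hl2]
  have e1 := congrFun h13 1
  have e2 := congrFun h13 2
  simp at e1 e2
  subst e1
  subst e2
  have hvec : ∀ b c : K, f ![0, b, c] = l3 • ![0, b, c] := by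
    intro b c
    have : (![0, b, c] : Fin 3 → K) = b • ![0, 1, 0] + c • ![0, 0, 1] := by simp
    rw [this, map_add, map_smul, map_smul, ← hl1, ← hl2, smul_add, smul_comm b, smul_comm c]
  -- image of the given point
  have hm := hmap
  unfold pt3 at hm
  rw [projMap_mk, Projectivization.mk_eq_mk_iff'] at hm
  obtain ⟨m, hm⟩ := hm
  have hm0 : m ≠ 0 := by
    rintro rfl
    rw [zero_smul] at hm
    have := f.map_eq_zero_iff.1 hm.symm
    simpa using congrFun this 0
  -- the centre is the nucleus
  have hPR : (pt3 1 α z1 (by simp) : Pt K) ≠ R := by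
    rintro rfl
    have : OnLine (pt3 1 α z1 (by simp) : Pt K) (lineX0 K) := by
      rw [onLine_rep, mem_lineX0]; exact hR0
    rw [onLine_pt3, mem_lineX0] at this
    simp at this
  have hR1 : R.rep 1 = 0 := by
    have hM := isLine_span_pair _ _ hPR
    set M := Submodule.span K {(pt3 1 α z1 (by simp) : Pt K).rep, R.rep} with hMdef
    have hPM : OnLine (pt3 1 α z1 (by simp) : Pt K) M :=
      (onLine_rep _ _).2 (Submodule.subset_span (by simp))
    have hRM : OnLine R M := (onLine_rep _ _).2 (Submodule.subset_span (by simp))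
    have hQM := hlines M hM hRM _ hPM
    rw [hmap] at hQM
    rw [onLine_pt3] at hPM hQM
    rw [onLine_rep] at hRM
    by_contra hR1
    -- then M contains three independent vectors
    have hd : (![0, 0, 1] : Fin 3 → K) ∈ M := by
      have : (![0, 0, 1] : Fin 3 → K) = (z1 - z2)⁻¹ • (![1, α, z1] - ![1, α, z2]) := by
        have : z1 - z2 ≠ 0 := sub_ne_zero.2 hz
        funext i
        fin_cases i <;> simp [this]
      rw [this]
      exact M.smul_mem _ (M.sub_mem hPM hQM)
    have h1 := line_eq_lineYaX hM hd hPM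
    rw [h1, mem_lineYaX, hR0, mul_zero] at hRM
    exact hR1 hRM
  have hRN := eq_nuc R hR0 hR1
  subst hRN
  have hfa : ∀ b c : K, f ![1, b, c] = ![m, m * α + l3 * (b - α), m * z2 + l3 * (c - z1)] := by
    intro b c
    have : (![1, b, c] : Fin 3 → K) = ![1, α, z1] + ![0, b - α, c - z1] := by simp
    rw [this, map_add, hvec, ← hm]
    funext i
    fin_cases i <;> simp
  have hml : m = l3 := by
    have hL := hlines (lineYaX (α + 1)) (isLine_lineYaX _)
      (by rw [onLine_pt3, mem_lineYaX]; simp) (pt3 1 (α + 1) z1 (by simp))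
      (by rw [onLine_pt3, mem_lineYaX]; simp)
    unfold pt3 at hL
    rw [projMap_mk, onLine_mk, hfa, mem_lineYaX] at hL
    simp at hL
    linear_combination -hL
  subst hml
  unfold pt3
  rw [projMap_mk, Projectivization.mk_eq_mk_iff']
  refine ⟨m, ?_⟩
  rw [hfa]
  funext i
  fin_cases i <;> simp <;> ring

theorem projMap_injective (f : (Fin 3 → K) ≃ₗ[K] (Fin 3 → K)) :
    Function.Injective (projMap f) := Projectivization.map_injective _ f.injective

/-- The shear `(x,y,z) ↦ (x,y,z+γx)`. -/
def shear (γ : K) : (Fin 3 → K) ≃ₗ[K] (Fin 3 → K) where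
  toFun v := ![v 0, v 1, v 2 + γ * v 0]
  invFun v := ![v 0, v 1, v 2 - γ * v 0]
  map_add' v w := by
    funext i
    fin_cases i <;> simp
    ring
  map_smul' c v := by
    funext i
    fin_cases i <;> simp
    ring
  left_inv v := by
    funext i
    fin_cases i <;> simp
  right_inv v := by
    funext i
    fin_cases i <;> simp

theorem shear_apply (γ : K) (v : Fin 3 → K) : shear γ v = ![v 0, v 1, v 2 + γ * v 0] := rfl

theorem shear_pt3 (γ a z : K) :
    projMap (shear γ) (pt3 1 a z (by simp)) = pt3 1 a (z + γ) (by simp) := by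
  unfold pt3
  rw [projMap_mk]
  congr 1
  rw [shear_apply]
  simp

theorem shear_fix (γ : K) (P : Pt K) (hP : OnLine P (lineX0 K)) :
    projMap (shear γ) P = P := by
  rw [onLine_rep, mem_lineX0] at hP
  conv_lhs => rw [← P.mk_rep]
  conv_rhs => rw [← P.mk_rep]
  rw [projMap_mk]
  congr 1
  rw [shear_apply, hP]
  funext i
  fin_cases i <;> simp [hP]

theorem shear_elation (γ : K) : IsElationAxis (shear γ) (lineX0 K) := by
  refine ⟨pt3 0 0 1 (by simp), isLine_lineX0, ?_, shear_fix γ, ?_⟩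
  · rw [onLine_pt3, mem_lineX0]; simp
  · intro M hM hN P hP
    rw [onLine_pt3] at hN
    rw [onLine_rep] at hP
    rw [← P.mk_rep, projMap_mk, onLine_mk]
    have : shear γ P.rep = P.rep + (γ * P.rep 0) • ![0, 0, 1] := by
      rw [shear_apply]
      funext i
      fin_cases i <;> simp
    rw [this]
    exact M.add_mem hP (M.smul_mem _ hN)

/-- Translations preserving all fibres. -/
def stabGrp (A : Set (Pt K)) : AddSubgroup K where
  carrier := {s | ∀ α z : K, z ∈ fib A α ↔ z + s ∈ fib A α}
  zero_mem' := by intro α z; simp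
  add_mem' := by
    intro s s' hs hs' α z
    rw [hs α z, hs' α (z + s), add_assoc]
  neg_mem' := by
    intro s hs α z
    rw [hs α (z + -s)]
    simp

theorem mem_stabGrp (A : Set (Pt K)) (s : K) :
    s ∈ stabGrp A ↔ ∀ α z : K, z ∈ fib A α ↔ z + s ∈ fib A α := Iff.rfl

theorem forward_dir [Fintype K] {h t : ℕ} (hcard : Fintype.card K = 2 ^ h)
    (ht2 : 2 < t) (htq : t < 2 ^ h) (A : Set (Pt K)) (hA : IsKMArc (2 ^ h) t A)
    (hnuc : IsNucleus t A (pt3 (0 : K) 0 1 (by simp)))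
    (hE : IsElationKMArc (2 ^ h) t A (pt3 (0 : K) 0 1 (by simp)) (lineX0 K)) :
    ∃ S : AddSubgroup K, Nat.card S = t ∧
      ∀ α : K, fib A α = ∅ ∨ ∃ β : K, fib A α = (fun s => β + s) '' (S : Set K) := by
  obtain ⟨-, -, -, -, htr⟩ := hE
  have hdiff : ∀ α z1 z2 : K, z1 ∈ fib A α → z2 ∈ fib A α → z2 - z1 ∈ stabGrp A := by
    intro α z1 z2 h1 h2
    by_cases hz : z1 = z2
    · subst hz
      rw [sub_self]
      exact (stabGrp A).zero_mem
    have hc := secantCount_of_fib hcard ht2 A hA hnuc α ⟨z1, h1⟩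
    have hne : lineYaX α ≠ lineX0 K := by
      intro hh
      have : (![1, α, 0] : Fin 3 → K) ∈ lineX0 K := by
        rw [← hh, mem_lineYaX]; simp
      rw [mem_lineX0] at this
      simp at this
    obtain ⟨f, hf, hst, hfz⟩ := htr _ (isLine_lineYaX α) hc hne _ h1
      (by rw [onLine_pt3, mem_lineYaX]; simp) _ h2 (by rw [onLine_pt3, mem_lineYaX]; simp)
    rw [mem_stabGrp]
    intro a z
    have hform := elation_form f hf α z1 z2 hz hfz a z
    unfold Stabilises at hst
    change pt3 1 a z (by simp) ∈ A ↔ pt3 1 a (z + (z2 - z1)) (by simp) ∈ A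
    rw [← hform]
    constructor
    · intro hzA
      rw [← hst]
      exact ⟨_, hzA, rfl⟩
    · intro hzA
      rw [← hst] at hzA
      obtain ⟨P, hPA, hP⟩ := hzA
      rw [← projMap_injective f hP]
      exact hPA
  have hcoset : ∀ α β : K, β ∈ fib A α →
      fib A α = (fun s => β + s) '' (stabGrp A : Set K) := by
    intro α β hβ
    ext z
    constructor
    · intro hz
      exact ⟨z - β, hdiff α β z hβ hz, by simp⟩
    · rintro ⟨s, hs, rfl⟩
      exact ((mem_stabGrp A s).1 hs α β).1 hβ
  refine ⟨stabGrp A, ?_, ?_⟩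
  · -- a nonempty fibre exists
    have hex : ∃ P ∈ A, ¬ OnLine P (lineX0 K) := by
      by_contra hcon
      push Not at hcon
      have h1 := hA.2 _ (isLine_lineX0 (K := K))
      have h2 : {P ∈ A | OnLine P (lineX0 K)} = A := by
        ext P
        exact ⟨fun h => h.1, fun h => ⟨h, hcon P h⟩⟩
      unfold secantCount at h1
      rw [h2, hA.1] at h1
      omega
    obtain ⟨P, hPA, hP⟩ := hex
    rcases pt_cases P with ⟨a, z, rfl⟩ | h
    · have h1 := ncard_fib hcard ht2 htq A hA hnuc a ⟨z, hPA⟩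
      rw [hcoset a z hPA, Set.ncard_image_of_injective _ (add_right_injective z)] at h1
      rw [← h1]
      exact Nat.card_coe_set_eq (stabGrp A : Set K)
    · exact absurd h hP
  · intro α
    rcases Set.eq_empty_or_nonempty (fib A α) with h0 | ⟨β, hβ⟩
    · exact Or.inl h0
    · exact Or.inr ⟨β, hcoset α β hβ⟩

theorem backward_dir [Fintype K] {h t : ℕ} (hcard : Fintype.card K = 2 ^ h)
    (ht2 : 2 < t) (htq : t < 2 ^ h) (A : Set (Pt K)) (hA : IsKMArc (2 ^ h) t A)
    (hnuc : IsNucleus t A (pt3 (0 : K) 0 1 (by simp)))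
    (S : AddSubgroup K)
    (hS : ∀ α : K, fib A α = ∅ ∨ ∃ β : K, fib A α = (fun s => β + s) '' (S : Set K)) :
    IsElationKMArc (2 ^ h) t A (pt3 (0 : K) 0 1 (by simp)) (lineX0 K) := by
  refine ⟨hA, isLine_lineX0, by rw [onLine_pt3, mem_lineX0]; simp, hnuc, ?_⟩
  intro L hL hc hne P hPA hPL Q hQA hQL
  have hNL := hnuc L hL hc
  rw [onLine_pt3] at hNL
  have haff : ∀ P ∈ A, OnLine P L → ∃ a z : K, P = pt3 1 a z (by simp) := by
    intro P hPA hPL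
    rcases pt_cases P with hh | h0
    · exact hh
    · exfalso
      rw [onLine_rep, mem_lineX0] at h0
      rw [onLine_rep] at hPL
      by_cases h1 : P.rep 1 = 0
      · apply nuc_not_mem hcard ht2 htq A hA hnuc
        rw [← eq_nuc P h0 h1]
        exact hPA
      · apply hne
        symm
        refine line_eq_of_le isLine_lineX0 hL ?_
        intro v hv
        rw [mem_lineX0] at hv
        have : v = (v 1 / P.rep 1) • P.rep + (v 2 - v 1 / P.rep 1 * P.rep 2) • ![0, 0, 1] := by
          funext i
          fin_cases i <;> simp [hv, h0, h1]
        rw [this]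
        exact L.add_mem (L.smul_mem _ hPL) (L.smul_mem _ hNL)
  obtain ⟨a, z1, rfl⟩ := haff P hPA hPL
  obtain ⟨a', z2, rfl⟩ := haff Q hQA hQL
  rw [onLine_pt3] at hPL hQL
  have hLa := line_eq_lineYaX hL hNL hPL
  have haa : a' = a := by
    rw [hLa, mem_lineYaX] at hQL
    simpa using hQL
  subst haa
  have hfibS : ∀ α z s : K, s ∈ S → z ∈ fib A α → z + s ∈ fib A α := by
    intro α z s hs hz
    rcases hS α with h0 | ⟨β, hβ⟩
    · rw [h0] at hz
      exact absurd hz (Set.notMem_empty z)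
    · rw [hβ] at hz ⊢
      obtain ⟨s', hs', rfl⟩ := hz
      exact ⟨s' + s, S.add_mem hs' hs, by simp [add_assoc]⟩
  have hγ : z2 - z1 ∈ S := by
    have h1 : z1 ∈ fib A a' := hPA
    have h2 : z2 ∈ fib A a' := hQA
    rcases hS a' with h0 | ⟨β, hβ⟩
    · rw [h0] at h1
      exact absurd h1 (Set.notMem_empty _)
    · rw [hβ] at h1 h2
      obtain ⟨s1, hs1, rfl⟩ := h1
      obtain ⟨s2, hs2, rfl⟩ := h2
      have := S.sub_mem hs2 hs1
      simpa using this
  refine ⟨shear (z2 - z1), shear_elation _, ?_, ?_⟩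
  · unfold Stabilises
    ext R
    constructor
    · rintro ⟨T, hT, rfl⟩
      rcases pt_cases T with ⟨b, z, rfl⟩ | h0
      · rw [shear_pt3]
        exact hfibS b z _ hγ hT
      · rw [shear_fix _ _ h0]
        exact hT
    · intro hR
      rcases pt_cases R with ⟨b, z, rfl⟩ | h0
      · refine ⟨pt3 1 b (z + -(z2 - z1)) (by simp), hfibS b z _ (S.neg_mem hγ) hR, ?_⟩
        rw [shear_pt3]
        congr 1
        ring
      · exact ⟨R, hR, shear_fix _ _ h0⟩
  · rw [shear_pt3]
    congr 1
    ring

/-- a KM-arc of type `2 < t < q` with `t`-nucleus `(0:0:1)` is an elation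
KM-arc with elation line `X = 0` iff there is an additive subgroup `S` of order `t` such
that for each `α` the set `{z | (1:α:z) ∈ A}` is empty or a coset of `S`. -/
theorem elation_iff_coset
    {K : Type*} [Field K] [Fintype K] (h t : ℕ)
    (hcard : Fintype.card K = 2 ^ h)
    (ht2 : 2 < t) (htq : t < 2 ^ h)
    (A : Set (Pt K))
    (hA : IsKMArc (2 ^ h) t A)
    (hnuc : IsNucleus t A (pt3 (0 : K) 0 1 (by simp))) :
    IsElationKMArc (2 ^ h) t A (pt3 (0 : K) 0 1 (by simp)) (lineX0 K)
      ↔ ∃ S : AddSubgroup K, Nat.card S = t ∧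
          ∀ α : K, {z : K | pt3 1 α z (by simp) ∈ A} = ∅ ∨
            ∃ β : K, {z : K | pt3 1 α z (by simp) ∈ A} = (fun s => β + s) '' (S : Set K) := by
  constructor
  · intro hE
    exact forward_dir hcard ht2 htq A hA hnuc hE
  · rintro ⟨S, -, hS⟩
    exact backward_dir hcard ht2 htq A hA hnuc S hS
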